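/- For every multiset {λ_1,...,λ_n} of complex numbers with D(λ_j) ≠ 0 for all j, and every nonincreasing sequence φ(0) ≥ φ(1) ≥ ... ≥ φ(n−J) > 0, there exist A ∈ C^{n×n} with eigenvalues λ_1,...,λ_n (counted with multiplicity) and b ∈ C^n such that for each k = 0,1,...,n−J, the minimum of ‖b − D(A)x‖_2 over x ∈ K_k(A,b) equals φ(k). -/

import Mathlib

/-- The Krylov space `K_k(A,b) = span{b, Ab, ..., A^{k-1}b}` (with `K_0 = {0}`). -/
noncomputable def Krylov (n : ℕ) (A : Matrix (Fin n) (Fin n) ℂ) (b : EuclideanSpace ℂ (Fin n))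
    (k : ℕ) : Submodule ℂ (EuclideanSpace ℂ (Fin n)) :=
  Submodule.span ℂ {x | ∃ i < k, x = (A ^ i).mulVec b}

/-! The image `D(A) K_k(A, b)` is spanned by the vectors `D(A) A ^ i b` with `i < k`, and the only
constraint tying these to the eigenvalues is that `b, D(A) b, ..., D(A) A ^ (m - 1) b` be linearly
independent, where `m = n - J`. Indeed, in `𝕜[X] / (p)` the classes of `1, D, ..., X ^ (m - 1) * D`
are independent, their degrees being distinct and smaller than `n = deg p`, and a linear isomorphism
can carry them to any other independent family; it transports multiplication by `X`, whose
characteristic polynomial is `p`, to `A`. So take `D(A) A ^ i b = v i` for an orthonormal family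
`v 0, ..., v m`, and `b = ∑ i, g i • v i`: the `k`-th residual is then the tail
`∑ i ≥ k, g i • v i`, of squared norm `φ k ^ 2` when `g i ^ 2 = φ i ^ 2 - φ (i + 1) ^ 2` for `i < m`
and `g m = φ m`. Independence of `b` from the other vectors amounts to `φ m ≠ 0`. -/

open Module Polynomial

section Cyclic

variable {K V : Type*} [Field K] [AddCommGroup V] [Module K V]

theorem exists_linearEquiv_apply_eq [FiniteDimensional K V] {ι : Type*} {v w : ι → V}
    (hv : LinearIndependent K v) (hw : LinearIndependent K w) :
    ∃ e : V ≃ₗ[K] V, ∀ i, e (v i) = w i := by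
  have : Finite ι := hv.finite
  obtain ⟨e, he⟩ := Submodule.exists_linearEquiv_restrict_eq
    (hv.linearCombinationEquiv.symm ≪≫ₗ hw.linearCombinationEquiv)
  refine ⟨e, fun i => ?_⟩
  have hvi : hv.linearCombinationEquiv (Finsupp.single i 1) = v i := by simp
  rw [← hvi, ← he]
  simp

theorem linearIndependent_cons_sum_smul {m : ℕ} {v : Fin (m + 1) → V} (hv : LinearIndependent K v)
    {g : Fin (m + 1) → K}
    (hg : g (Fin.last m) ≠ 0) :
    LinearIndependent K (Fin.cons (∑ i, g i • v i) (v ∘ Fin.castSucc) : Fin (m + 1) → V) := by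
  obtain ⟨hv_init, hv_last⟩ := linearIndependent_finSucc'.1 hv
  refine LinearIndependent.finCons hv_init fun h_mem => hv_last ?_
  have h_init : ∑ i : Fin m, g i.castSucc • v i.castSucc ∈
      Submodule.span K (Set.range (v ∘ Fin.castSucc)) :=
    Submodule.sum_mem _ fun i _ => Submodule.smul_mem _ _ (Submodule.subset_span ⟨i, rfl⟩)
  rw [Fin.sum_univ_castSucc, Submodule.add_mem_iff_right _ h_init] at h_mem
  exact (Submodule.smul_mem_iff _ hg).1 h_mem

theorem linearIndependent_cons_one_X_pow_mul {D : K[X]} (hD : 0 < D.natDegree) (m : ℕ) :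
    LinearIndependent K (Fin.cons 1 fun i : Fin m => X ^ (i : ℕ) * D : Fin (m + 1) → K[X]) := by
  have hD0 : D ≠ 0 := ne_zero_of_natDegree_gt hD
  refine LinearIndependent.finCons ?_ fun h_mem => ?_
  · have hX : LinearIndependent K fun i : ℕ => (X ^ i : K[X]) := by
      simpa [← X_pow_eq_monomial] using (basisMonomials K).linearIndependent
    exact (hX.map' (LinearMap.mulRight K D)
      (LinearMap.ker_eq_bot.2 (mul_left_injective₀ hD0))).comp _ Fin.val_injective
  · have h_dvd : D ∣ 1 := by
      have h_le : Submodule.span K (Set.range fun i : Fin m => X ^ (i : ℕ) * D) ≤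
          (Ideal.span {D}).restrictScalars K :=
        Submodule.span_le.2 <| Set.range_subset_iff.2 fun i =>
          Ideal.mem_span_singleton.2 (dvd_mul_left D _)
      exact Ideal.mem_span_singleton.1 (h_le h_mem)
    exact hD.ne' (natDegree_eq_zero_of_isUnit (isUnit_of_dvd_one h_dvd))

theorem cons_one_X_pow_mul_mem_degreeLT {D : K[X]} (hD : 0 < D.natDegree) {m n : ℕ}
    (hDm : D.natDegree + m ≤ n) (i : Fin (m + 1)) :
    (Fin.cons 1 fun j : Fin m => X ^ (j : ℕ) * D : Fin (m + 1) → K[X]) i ∈ degreeLT K n := by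
  have hD0 : D ≠ 0 := ne_zero_of_natDegree_gt hD
  rw [mem_degreeLT]
  cases i using Fin.cases with
  | zero => simp only [Fin.cons_zero, degree_one, Nat.cast_pos']; omega
  | succ j =>
    rw [Fin.cons_succ, degree_mul, degree_X_pow, degree_eq_natDegree hD0]
    norm_cast
    omega

theorem exists_end_charpoly_eq_dvd_of_aeval_apply_eq_zero [FiniteDimensional K V] {p : K[X]}
    (hp : p.Monic) (hpV : p.natDegree = finrank K V) :
    ∃ (f : End K V) (c : V), f.charpoly = p ∧ ∀ q : K[X], aeval f q c = 0 → p ∣ q := by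
  let pb := AdjoinRoot.powerBasis' hp
  have : Module.Finite K (AdjoinRoot p) := pb.finite
  let e : AdjoinRoot p ≃ₗ[K] V :=
    LinearEquiv.ofFinrankEq _ _ (by rw [pb.finrank, ← hpV, AdjoinRoot.powerBasis'_dim])
  refine ⟨e.conjAlgEquiv K (Algebra.lmul K _ (AdjoinRoot.root p)), e 1, ?_, fun q hq => ?_⟩
  · calc (e.conj (Algebra.lmul K _ (AdjoinRoot.root p))).charpoly
      _ = (Algebra.lmul K _ pb.gen).charpoly := by
        rw [LinearEquiv.charpoly_conj, AdjoinRoot.powerBasis'_gen]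
      _ = minpoly K pb.gen := by
        rw [← charpoly_leftMulMatrix, Algebra.leftMulMatrix_apply, LinearMap.charpoly_toMatrix]
      _ = p := by
        rw [AdjoinRoot.powerBasis'_gen, AdjoinRoot.minpoly_root hp.ne_zero, hp.leadingCoeff]
        simp
  · rw [aeval_algEquiv, AlgHom.comp_apply, aeval_algHom_apply] at hq
    simpa [LinearEquiv.conjAlgEquiv_apply] using hq

theorem linearIndependent_cons_aeval_pow_apply {f : End K V} {c : V} {p D : K[X]}
    (hc : ∀ q : K[X], aeval f q c = 0 → p ∣ q) (hD : 0 < D.natDegree) {m : ℕ}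
    (hDm : D.natDegree + m ≤ p.natDegree) :
    LinearIndependent K (Fin.cons c fun i : Fin m => aeval f D ((f ^ (i : ℕ)) c) :
      Fin (m + 1) → V) := by
  let u : Fin (m + 1) → K[X] := Fin.cons 1 fun i : Fin m => X ^ (i : ℕ) * D
  let T : K[X] →ₗ[K] V := (LinearMap.applyₗ c).comp (aeval f).toLinearMap
  have h_disj : Disjoint (Submodule.span K (Set.range u)) (LinearMap.ker T) := by
    have hp0 : p ≠ 0 := by rintro rfl; simp at hDm; omega
    have h_le : Submodule.span K (Set.range u) ≤ degreeLT K p.natDegree :=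
      Submodule.span_le.2 <| Set.range_subset_iff.2 <| cons_one_X_pow_mul_mem_degreeLT hD hDm
    refine Submodule.disjoint_def.2 fun q hq_span hq_ker => ?_
    refine eq_zero_of_dvd_of_degree_lt (hc q hq_ker) ?_
    rw [degree_eq_natDegree hp0]
    exact mem_degreeLT.1 (h_le hq_span)
  have hTu : T ∘ u = Fin.cons c fun i : Fin m => aeval f D ((f ^ (i : ℕ)) c) := by
    funext i
    cases i using Fin.cases with
    | zero => simp [T, u]
    | succ j => simp [T, u, mul_comm _ D]
  exact hTu ▸ (linearIndependent_cons_one_X_pow_mul hD m).map h_disj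

theorem exists_end_charpoly_eq_aeval_pow_apply_eq [FiniteDimensional K V] {p D : K[X]}
    (hp : p.Monic) (hpV : p.natDegree = finrank K V) (hD : 0 < D.natDegree) {m : ℕ}
    (hDm : D.natDegree + m ≤ finrank K V) {b : V} {v : Fin m → V}
    (hbv : LinearIndependent K (Fin.cons b v : Fin (m + 1) → V)) :
    ∃ f : End K V, f.charpoly = p ∧ ∀ i : Fin m, aeval f D ((f ^ (i : ℕ)) b) = v i := by
  obtain ⟨f, c, hf, hc⟩ := exists_end_charpoly_eq_dvd_of_aeval_apply_eq_zero hp hpV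
  obtain ⟨e, he⟩ := exists_linearEquiv_apply_eq
    (linearIndependent_cons_aeval_pow_apply hc hD (hDm.trans_eq hpV.symm)) hbv
  have hec : e c = b := by simpa using he 0
  refine ⟨e.conjAlgEquiv K f, (e.charpoly_conj f).trans hf, fun i => ?_⟩
  calc aeval (e.conjAlgEquiv K f) D ((e.conjAlgEquiv K f ^ (i : ℕ)) b)
    _ = e (aeval f D ((f ^ (i : ℕ)) c)) := by
      rw [← map_pow, aeval_algEquiv, ← hec]
      simp [LinearEquiv.conjAlgEquiv_apply, -map_pow]
    _ = v i := by simpa using he i.succ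

end Cyclic

section LeastSquares

variable {𝕜 E : Type*} [RCLike 𝕜] [NormedAddCommGroup E] [InnerProductSpace 𝕜 E]

theorem isLeast_norm_sub_image {U : Submodule 𝕜 E} {b w : E} (hw : w ∈ U) (hbw : b - w ∈ Uᗮ) :
    IsLeast ((fun y => ‖b - y‖) '' U) ‖b - w‖ := by
  refine ⟨⟨w, hw, rfl⟩, Set.forall_mem_image.2 fun y hy => ?_⟩
  rw [(U.norm_eq_iInf_iff_inner_eq_zero hw).2 ((U.mem_orthogonal' _).1 hbw)]
  exact ciInf_le ⟨0, Set.forall_mem_range.2 fun _ => norm_nonneg _⟩ (⟨y, hy⟩ : U)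

variable {ι : Type*} {v : ι → E}

theorem norm_sum_smul_sq_of_orthonormal (hv : Orthonormal 𝕜 v) (g : ι → 𝕜) (s : Finset ι) :
    ‖∑ i ∈ s, g i • v i‖ ^ 2 = ∑ i ∈ s, ‖g i‖ ^ 2 := by
  rw [← RCLike.ofReal_inj (K := 𝕜), RCLike.ofReal_pow, ← inner_self_eq_norm_sq_to_K, hv.inner_sum]
  simp [RCLike.conj_mul]

theorem isLeast_norm_sum_smul_sub_span [Fintype ι] [DecidableEq ι] (hv : Orthonormal 𝕜 v)
    (g : ι → 𝕜) (s : Finset ι) :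
    IsLeast ((fun y => ‖∑ i, g i • v i - y‖) '' Submodule.span 𝕜 (v '' s))
      ‖∑ i ∈ sᶜ, g i • v i‖ := by
  have h_split : ∑ i, g i • v i - ∑ i ∈ s, g i • v i = ∑ i ∈ sᶜ, g i • v i := by
    rw [← Finset.sum_add_sum_compl s, add_sub_cancel_left]
  rw [← h_split]
  refine isLeast_norm_sub_image (Submodule.sum_mem _ fun i hi =>
    Submodule.smul_mem _ _ (Submodule.subset_span ⟨i, hi, rfl⟩)) ?_
  have h_ortho : Submodule.span 𝕜 (v '' ↑sᶜ) ⟂ Submodule.span 𝕜 (v '' s) := by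
    rw [Submodule.isOrtho_span]
    rintro _ ⟨i, hi, rfl⟩ _ ⟨j, hj, rfl⟩
    exact hv.inner_eq_zero fun hij => Finset.mem_compl.1 hi (hij ▸ hj)
  rw [h_split]
  exact h_ortho (Submodule.sum_mem _ fun i hi =>
    Submodule.smul_mem _ _ (Submodule.subset_span ⟨i, hi, rfl⟩))

theorem exists_sum_Ico_sq_eq {m : ℕ} {φ : ℕ → ℝ} (hφ : AntitoneOn φ (Set.Iic m))
    (hφm : 0 ≤ φ m) :
    ∃ g : ℕ → ℝ, g m = φ m ∧ ∀ k ≤ m, ∑ i ∈ Finset.Ico k (m + 1), g i ^ 2 = φ k ^ 2 := by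
  refine ⟨Function.update (fun i => √(φ i ^ 2 - φ (i + 1) ^ 2)) m (φ m), by simp, fun k hk => ?_⟩
  induction hk using Nat.decreasingInduction with
  | self => simp
  | of_succ k hk ih =>
    have h_nonneg : 0 ≤ φ (k + 1) := hφm.trans (hφ hk (Set.mem_Iic.2 le_rfl) hk)
    have h_anti : φ (k + 1) ≤ φ k := hφ hk.le hk k.le_succ
    rw [Finset.sum_eq_sum_Ico_succ_bot (by omega), ih, Function.update_of_ne hk.ne,
      Real.sq_sqrt (sub_nonneg.2 (pow_le_pow_left₀ h_nonneg h_anti 2)), sub_add_cancel]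

end LeastSquares

section Residual

/-- The `k`-th Krylov subspace `span {b, f b, ..., f ^ (k - 1) b}` of a linear operator `f`, the
coordinate-free form of `Krylov`. -/
def krylovSubspace {R M : Type*} [CommSemiring R] [AddCommMonoid M] [Module R M] (f : End R M)
    (b : M) (k : ℕ) : Submodule R M :=
  Submodule.span R ((fun i => (f ^ i) b) '' Set.Iio k)

theorem map_krylovSubspace_eq_span {R M N : Type*} [CommSemiring R] [AddCommMonoid M] [Module R M]
    [AddCommMonoid N] [Module R N] {g : M →ₗ[R] N} {f : End R M} {b : M} {m k : ℕ}
    {v : Fin (m + 1) → N} (hv : ∀ i : Fin m, g ((f ^ (i : ℕ)) b) = v i.castSucc) (hk : k ≤ m) :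
    (krylovSubspace f b k).map g = Submodule.span R (v '' {i | (i : ℕ) < k}) := by
  rw [krylovSubspace, Submodule.map_span, Set.image_image]
  congr 1
  ext x
  constructor
  · rintro ⟨i, hi, rfl⟩
    exact ⟨Fin.castSucc ⟨i, hi.trans_le hk⟩, hi, (hv ⟨i, hi.trans_le hk⟩).symm⟩
  · rintro ⟨i, hi, rfl⟩
    exact ⟨i, hi, hv ⟨i, hi.trans_le hk⟩⟩

variable {𝕜 E : Type*} [RCLike 𝕜] [NormedAddCommGroup E] [InnerProductSpace 𝕜 E]

theorem isLeast_residual_of_orthonormal {f h : End 𝕜 E} {m : ℕ} {v : Fin (m + 1) → E}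
    (hv : Orthonormal 𝕜 v) (g : ℕ → 𝕜)
    (hfv : ∀ i : Fin m, h ((f ^ (i : ℕ)) (∑ i : Fin (m + 1), g i • v i)) = v i.castSucc)
    {k : ℕ} (hk : k ≤ m) :
    IsLeast ((fun x => ‖∑ i : Fin (m + 1), g i • v i - h x‖) ''
        krylovSubspace f (∑ i : Fin (m + 1), g i • v i) k)
      √(∑ i ∈ Finset.Ico k (m + 1), ‖g i‖ ^ 2) := by
  let s : Finset (Fin (m + 1)) := {i | (i : ℕ) < k}
  have h_tail : ∑ i ∈ Finset.Ico k (m + 1), ‖g i‖ ^ 2 = ∑ i ∈ sᶜ, ‖g i‖ ^ 2 := by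
    rw [Finset.compl_filter, Finset.sum_filter,
      Fin.sum_univ_eq_sum_range (fun i => if ¬ i < k then ‖g i‖ ^ 2 else 0), ← Finset.sum_filter]
    congr 1
    ext i
    simp [and_comm]
  rw [h_tail, ← norm_sum_smul_sq_of_orthonormal hv, Real.sqrt_sq (norm_nonneg _)]
  convert isLeast_norm_sum_smul_sub_span hv (fun i : Fin (m + 1) => g i) s using 1
  rw [Finset.coe_filter_univ, ← map_krylovSubspace_eq_span hfv hk, Submodule.map_coe,
    Set.image_image]

theorem stmt17_general [FiniteDimensional 𝕜 E] {p D : 𝕜[X]} (hp : p.Monic)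
    (hpE : p.natDegree = finrank 𝕜 E) (hD : 0 < D.natDegree) {m : ℕ}
    (hDm : D.natDegree + m ≤ finrank 𝕜 E) {φ : ℕ → ℝ} (hφ : AntitoneOn φ (Set.Iic m))
    (hφm : 0 < φ m) :
    ∃ (f : End 𝕜 E) (b : E), f.charpoly = p ∧
      ∀ k ≤ m, IsLeast ((fun x => ‖b - aeval f D x‖) '' krylovSubspace f b k) (φ k) := by
  obtain ⟨g, hgm, hg⟩ := exists_sum_Ico_sq_eq hφ hφm.le
  let v : Fin (m + 1) → E := stdOrthonormalBasis 𝕜 E ∘ Fin.castLE (by omega)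
  have hv : Orthonormal 𝕜 v :=
    (stdOrthonormalBasis 𝕜 E).orthonormal.comp _ (Fin.castLE_injective _)
  have hg_last : (g (Fin.last m) : 𝕜) ≠ 0 := by simpa [hgm] using hφm.ne'
  obtain ⟨f, hf, hfv⟩ := exists_end_charpoly_eq_aeval_pow_apply_eq hp hpE hD hDm
    (linearIndependent_cons_sum_smul hv.linearIndependent
      (g := fun i => ((g i : ℝ) : 𝕜)) hg_last)
  refine ⟨f, ∑ i : Fin (m + 1), (g i : 𝕜) • v i, hf, fun k hk => ?_⟩
  have hφk : 0 ≤ φ k := hφm.le.trans (hφ hk Set.self_mem_Iic hk)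
  have h_norm : √(∑ i ∈ Finset.Ico k (m + 1), ‖(g i : 𝕜)‖ ^ 2) = φ k := by
    simp only [RCLike.norm_ofReal, sq_abs, hg k hk, Real.sqrt_sq hφk]
  exact h_norm ▸ isLeast_residual_of_orthonormal hv (fun i => (g i : 𝕜)) hfv hk

end Residual

section EuclideanMatrix

open Matrix

theorem charpoly_toLpLinAlgEquiv {ι K : Type*} [Fintype ι] [DecidableEq ι] [Field K]
    (q : ENNReal) (A : Matrix ι ι K) : (toLpLinAlgEquiv q A).charpoly = A.charpoly :=
  charpoly_toLin A (PiLp.basisFun q K ι)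

theorem setOf_krylov_residual_eq_image {n : ℕ} (A : Matrix (Fin n) (Fin n) ℂ)
    (b : EuclideanSpace ℂ (Fin n)) (D : ℂ[X]) (k : ℕ) :
    {r : ℝ | ∃ x ∈ Krylov n A b k,
        r = ‖b - (WithLp.equiv 2 (Fin n → ℂ)).symm ((aeval A D).mulVec x)‖} =
      (fun x => ‖b - aeval (toLpLinAlgEquiv 2 A) D x‖) ''
        krylovSubspace (toLpLinAlgEquiv 2 A) b k := by
  have h_krylov : Krylov n A b k = krylovSubspace (toLpLinAlgEquiv 2 A) b k := by
    have h_pow (i : ℕ) (x : EuclideanSpace ℂ (Fin n)) :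
        x = (A ^ i).mulVec b ↔ (toLpLinAlgEquiv 2 A ^ i) b = x := by
      rw [← map_pow, WithLp.ext_iff, eq_comm]
      rfl
    simp only [Krylov, krylovSubspace, h_pow]
    rfl
  have h_aeval : aeval (toLpLinAlgEquiv 2 A) D = toLpLinAlgEquiv 2 (aeval A D) :=
    aeval_algHom_apply (toLpLinAlgEquiv 2).toAlgHom A D
  ext r
  rw [h_krylov, h_aeval]
  exact exists_congr fun x => and_congr_right fun _ => eq_comm

theorem exists_matrix_isLeast_residual_iff {n m : ℕ} {p D : ℂ[X]} {φ : ℕ → ℝ} :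
    (∃ (A : Matrix (Fin n) (Fin n) ℂ) (b : EuclideanSpace ℂ (Fin n)), A.charpoly = p ∧
        ∀ k ≤ m, IsLeast {r : ℝ | ∃ x ∈ Krylov n A b k,
          r = ‖b - (WithLp.equiv 2 (Fin n → ℂ)).symm ((aeval A D).mulVec x)‖} (φ k)) ↔
      ∃ (f : End ℂ (EuclideanSpace ℂ (Fin n))) (b : EuclideanSpace ℂ (Fin n)), f.charpoly = p ∧
        ∀ k ≤ m, IsLeast ((fun x => ‖b - aeval f D x‖) '' krylovSubspace f b k) (φ k) := by
  rw [(toLpLinAlgEquiv 2).surjective.exists]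
  simp only [charpoly_toLpLinAlgEquiv, setOf_krylov_residual_eq_image]

end EuclideanMatrix

open Polynomial in
/-- Any nonincreasing convergence curve with any prescribed eigenvalues: for any eigenvalues
`λ_1,...,λ_n` with `D(λ_j) ≠ 0` and any nonincreasing `φ(0) ≥ ... ≥ φ(n−J) > 0`, there exist
`A` with characteristic polynomial `∏ (z − λ_j)` and `b` such that for every `k ≤ n−J` the
minimum of `‖b − D(A)x‖₂` over `x ∈ K_k(A,b)` equals `φ(k)`. -/
theorem stmt17 (n J : ℕ) (hJ : 1 ≤ J) (hn : J < n)
    (D : Polynomial ℂ) (hD : D.natDegree = J)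
    (lam : Fin n → ℂ) (hroot : ∀ j, D.eval (lam j) ≠ 0)
    (φ : ℕ → ℝ) (hmono : ∀ k, k < n - J → φ (k + 1) ≤ φ k) (hpos : 0 < φ (n - J)) :
    ∃ (A : Matrix (Fin n) (Fin n) ℂ) (b : EuclideanSpace ℂ (Fin n)),
      A.charpoly = ∏ j : Fin n, (X - C (lam j)) ∧
      ∀ k ≤ n - J,
        IsLeast {r : ℝ | ∃ x ∈ Krylov n A b k,
          r = ‖b - (WithLp.equiv 2 (Fin n → ℂ)).symm ((aeval A D).mulVec x)‖} (φ k) := by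
  have hφ : AntitoneOn φ (Set.Iic (n - J)) :=
    antitoneOn_of_add_one_le Set.ordConnected_Iic fun k _ _ hk => hmono k hk
  exact exists_matrix_isLeast_residual_iff.2 <| stmt17_general
    (monic_prod_X_sub_C lam Finset.univ) (by simp) (by omega) (by simp; omega) hφ hpos
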